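/- arXiv:1702.06223 — 4 statements merged into one kernel-verified Lean document; each statement's English description precedes it below -/
import Mathlib

section
/- Let q ∈ ℂ be nonzero and not a root of unity (q^n ≠ 1 for every integer n ≥ 1). Let V be a nonzero finite-dimensional complex vector space and let X, Y : V → V be linear maps satisfying X∘Y − q·(Y∘X) = id_V, such that the only ℂ-subspaces U ⊆ V with X(U) ⊆ U and Y(U) ⊆ U are 0 and V. Then Y∘X = (1/(1−q))·id_V and X∘Y = (1/(1−q))·id_V; in particular X and Y commute. -/
/-!
If `q = 0` then `xy = 1`, and finite dimensionality gives `yx = 1`. Otherwise the commutator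
`z = xy - yx` satisfies `zy = q yz` and `xz = q zx`, so its kernel is invariant and irreducibility
leaves `z = 0` or `z` invertible. If `z` is invertible, the powers of `y` that do not vanish are
eigenvectors of conjugation by `z` with the distinct eigenvalues `qⁿ`, so finite dimensionality
makes `y` nilpotent; then `x yⁿ⁺¹ - qⁿ⁺¹ yⁿ⁺¹ x = (1 + q + ⋯ + qⁿ) yⁿ` descends from `yⁿ⁺¹ = 0` to
`y⁰ = 0`. Hence `z = 0`, and the relation reads `(1 - q) yx = 1`.
-/

section CommRing

variable {R A : Type*} [CommRing R] [Ring A] [Algebra R A]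

/-- The elements `x`, `y` of an algebra satisfy the defining relation `xy - q yx = 1` of the
quantized Weyl algebra, i.e. they are the images of its generators under an algebra map. -/
def IsQuantumWeylPair (q : R) (x y : A) : Prop :=
  x * y - q • (y * x) = 1

namespace IsQuantumWeylPair

variable {q : R} {x y : A}

theorem mul_eq (h : IsQuantumWeylPair q x y) : x * y = 1 + q • (y * x) :=
  sub_eq_iff_eq_add.mp h

theorem lie_eq (h : IsQuantumWeylPair q x y) : ⁅x, y⁆ = 1 + (q - 1) • (y * x) := by
  rw [Ring.lie_def, h.mul_eq]
  module

theorem semiconjBy_lie_left (h : IsQuantumWeylPair q x y) : SemiconjBy ⁅x, y⁆ (q • x) x := by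
  simp only [SemiconjBy, h.lie_eq, add_mul, mul_add, smul_mul_assoc, mul_smul_comm, ← mul_assoc,
    h.mul_eq, one_mul, mul_one]
  module

theorem semiconjBy_lie_right (h : IsQuantumWeylPair q x y) : SemiconjBy ⁅x, y⁆ y (q • y) := by
  simp only [SemiconjBy, h.lie_eq, add_mul, mul_add, smul_mul_assoc, mul_smul_comm, mul_assoc,
    h.mul_eq, one_mul, mul_one]
  module

theorem mul_pow_succ (h : IsQuantumWeylPair q x y) (n : ℕ) :
    x * y ^ (n + 1) =
      q ^ (n + 1) • (y ^ (n + 1) * x) + (∑ i ∈ Finset.range (n + 1), q ^ i) • y ^ n := by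
  induction n with
  | zero => simp [h.mul_eq, add_comm]
  | succ n ih =>
    rw [pow_succ y (n + 1), ← mul_assoc, ih, Finset.sum_range_succ _ (n + 1), add_mul,
      smul_mul_assoc, smul_mul_assoc, mul_assoc, h.mul_eq, ← pow_succ, mul_add, mul_smul_comm,
      ← mul_assoc, mul_one]
    module

end IsQuantumWeylPair

end CommRing

theorem geom_sum_ne_zero_of_not_isOfFinOrder {R : Type*} [Ring R] {q : R} (hq : ¬IsOfFinOrder q)
    (n : ℕ) : ∑ i ∈ Finset.range (n + 1), q ^ i ≠ 0 := by
  intro hsum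
  have hpow : q ^ (n + 1) = 1 := by
    rw [← sub_eq_zero, ← geom_sum_mul, hsum, zero_mul]
  exact hq (isOfFinOrder_iff_pow_eq_one.mpr ⟨n + 1, n.succ_pos, hpow⟩)

theorem pow_right_injective_of_not_isOfFinOrder {M₀ : Type*} [MonoidWithZero M₀]
    [IsLeftCancelMulZero M₀] {q : M₀} (hq₀ : q ≠ 0) (hq : ¬IsOfFinOrder q) :
    Function.Injective (q ^ · : ℕ → M₀) := by
  refine Function.Injective.of_lt_imp_ne fun m n hmn heq => hq ?_
  obtain ⟨k, hk, rfl⟩ := exists_pos_add_of_lt' hmn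
  have hpow : q ^ k = 1 := by
    rwa [pow_add, left_eq_mul₀ (pow_ne_zero m hq₀)] at heq
  exact isOfFinOrder_iff_pow_eq_one.mpr ⟨k, hk, hpow⟩

theorem apply_mem_ker_of_semiconjBy {R V : Type*} [Semiring R] [AddCommMonoid V] [Module R V]
    {f g g' : Module.End R V} (h : SemiconjBy f g g') {v : V} (hv : v ∈ LinearMap.ker f) :
    g v ∈ LinearMap.ker f := by
  rw [LinearMap.mem_ker] at hv ⊢
  rw [← Module.End.mul_apply, h.eq, Module.End.mul_apply, hv, map_zero]

section Field

variable {K A : Type*} [Field K] [Ring A] [Algebra K A] {q : K}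

theorem isNilpotent_of_isUnit_of_semiconjBy_smul [FiniteDimensional K A] (hq : ¬IsOfFinOrder q)
    {z a : A} (hz : IsUnit z) (hza : SemiconjBy z a (q • a)) : IsNilpotent a := by
  obtain ⟨u, rfl⟩ := hz
  rcases eq_or_ne q 0 with rfl | hq₀
  · rw [SemiconjBy, zero_smul, zero_mul, Units.mul_right_eq_zero] at hza
    exact hza ▸ IsNilpotent.zero
  by_contra hnil
  let conj : Module.End K A := LinearMap.mulLeftRight K (↑u, ↑u⁻¹)
  have conj_pow (n : ℕ) : conj (a ^ n) = q ^ n • a ^ n := by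
    rw [LinearMap.mulLeftRight_apply, (hza.pow_right n).eq, Units.mul_inv_cancel_right, smul_pow]
  have hasEigenvalue (n : ℕ) : conj.HasEigenvalue (q ^ n) :=
    Module.End.hasEigenvalue_of_hasEigenvector
      ⟨Module.End.mem_eigenspace_iff.mpr (conj_pow n), fun h => hnil ⟨n, h⟩⟩
  have : Infinite conj.Eigenvalues := Infinite.of_injective (fun n : ℕ => ⟨q ^ n, hasEigenvalue n⟩)
    fun _ _ h => pow_right_injective_of_not_isOfFinOrder hq₀ hq (congrArg Subtype.val h)
  exact not_finite conj.Eigenvalues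

namespace IsQuantumWeylPair

variable {x y : A}

theorem subsingleton_of_isNilpotent (h : IsQuantumWeylPair q x y) (hq : ¬IsOfFinOrder q)
    (hy : IsNilpotent y) : Subsingleton A := by
  have descend (n : ℕ) (hn : y ^ (n + 1) = 0) : y ^ n = 0 := by
    have hsum := h.mul_pow_succ n
    rw [hn, mul_zero, zero_mul, smul_zero, zero_add] at hsum
    exact (smul_eq_zero.mp hsum.symm).resolve_left (geom_sum_ne_zero_of_not_isOfFinOrder hq n)
  obtain ⟨n, hn⟩ := hy
  have hone : y ^ 0 = 0 := by
    induction n with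
    | zero => exact hn
    | succ n ih => exact ih (descend n hn)
  exact subsingleton_of_zero_eq_one (by rw [← hone, pow_zero])

theorem subsingleton_of_isUnit_lie [FiniteDimensional K A] (h : IsQuantumWeylPair q x y)
    (hq : ¬IsOfFinOrder q) (hz : IsUnit ⁅x, y⁆) : Subsingleton A :=
  h.subsingleton_of_isNilpotent hq <|
    isNilpotent_of_isUnit_of_semiconjBy_smul hq hz h.semiconjBy_lie_right

theorem mul_eq_smul_one_of_commute (h : IsQuantumWeylPair q x y) (hq : q ≠ 1)
    (hxy : Commute x y) : y * x = (1 / (1 - q)) • (1 : A) := by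
  have hsub : 1 - q ≠ 0 := sub_ne_zero.mpr hq.symm
  have hscaled : (1 - q) • (y * x) = 1 := by
    simpa only [IsQuantumWeylPair, hxy.eq, sub_smul, one_smul] using h
  rw [one_div, eq_inv_smul_iff₀ hsub, hscaled]

end IsQuantumWeylPair

theorem IsQuantumWeylPair.commute_of_irreducible {V : Type*} [AddCommGroup V] [Module K V]
    [FiniteDimensional K V] {X Y : Module.End K V} (h : IsQuantumWeylPair q X Y)
    (hq : ¬IsOfFinOrder q)
    (hirr : ∀ U : Submodule K V, (∀ v ∈ U, X v ∈ U) → (∀ v ∈ U, Y v ∈ U) → U = ⊥ ∨ U = ⊤) :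
    Commute X Y := by
  rcases eq_or_ne q 0 with rfl | hq₀
  · have hXY : X * Y = 1 := by simpa using h.mul_eq
    exact hXY.trans (mul_eq_one_comm.mp hXY).symm
  have semiconjBy_X : SemiconjBy ⁅X, Y⁆ X (q⁻¹ • X) := by
    simpa only [inv_smul_smul₀ hq₀] using h.semiconjBy_lie_left.smul_right q⁻¹
  rw [commute_iff_lie_eq]
  rcases hirr (LinearMap.ker ⁅X, Y⁆) (fun _ => apply_mem_ker_of_semiconjBy semiconjBy_X)
    (fun _ => apply_mem_ker_of_semiconjBy h.semiconjBy_lie_right) with hker | hker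
  · have := h.subsingleton_of_isUnit_lie hq ((LinearMap.isUnit_iff_ker_eq_bot _).mpr hker)
    exact Subsingleton.elim _ _
  · exact LinearMap.ker_eq_top.mp hker

end Field

theorem weyl_algebra_irreducible_scalar_action_general
    {K : Type*} [Field K] (q : K) (hq : ∀ n : ℕ, 1 ≤ n → q ^ n ≠ 1)
    {V : Type*} [AddCommGroup V] [Module K V] [FiniteDimensional K V]
    (X Y : V →ₗ[K] V)
    (hrel : X ∘ₗ Y - q • (Y ∘ₗ X) = LinearMap.id)
    (hirr : ∀ U : Submodule K V, (∀ v ∈ U, X v ∈ U) → (∀ v ∈ U, Y v ∈ U) →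
      U = ⊥ ∨ U = ⊤) :
    Y ∘ₗ X = (1 / (1 - q)) • (LinearMap.id : V →ₗ[K] V) ∧
    X ∘ₗ Y = (1 / (1 - q)) • (LinearMap.id : V →ₗ[K] V) ∧
    X ∘ₗ Y = Y ∘ₗ X := by
  have hweyl : IsQuantumWeylPair q X Y := hrel
  have hord : ¬IsOfFinOrder q := fun h =>
    let ⟨n, hn, hpow⟩ := isOfFinOrder_iff_pow_eq_one.mp h
    hq n hn hpow
  have hcomm : X ∘ₗ Y = Y ∘ₗ X := hweyl.commute_of_irreducible hord hirr
  have hYX : Y ∘ₗ X = (1 / (1 - q)) • (LinearMap.id : V →ₗ[K] V) :=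
    hweyl.mul_eq_smul_one_of_commute (by simpa using hq 1 le_rfl) hcomm
  exact ⟨hYX, hcomm.trans hYX, hcomm⟩

/-- On a finite-dimensional irreducible representation of the quantized Weyl algebra,
with `q` not a root of unity, the element `T = YX` acts as the scalar `1/(1−q)`,
and so does `XY`; in particular `X` and `Y` commute. -/
theorem weyl_algebra_irreducible_scalar_action
    (q : ℂ) (hq0 : q ≠ 0) (hq : ∀ n : ℕ, 1 ≤ n → q ^ n ≠ 1)
    {V : Type*} [AddCommGroup V] [Module ℂ V] [FiniteDimensional ℂ V] [Nontrivial V]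
    (X Y : V →ₗ[ℂ] V)
    (hrel : X ∘ₗ Y - q • (Y ∘ₗ X) = LinearMap.id)
    (hirr : ∀ U : Submodule ℂ V, (∀ v ∈ U, X v ∈ U) → (∀ v ∈ U, Y v ∈ U) →
      U = ⊥ ∨ U = ⊤) :
    Y ∘ₗ X = (1 / (1 - q)) • (LinearMap.id : V →ₗ[ℂ] V) ∧
    X ∘ₗ Y = (1 / (1 - q)) • (LinearMap.id : V →ₗ[ℂ] V) ∧
    X ∘ₗ Y = Y ∘ₗ X :=
  weyl_algebra_irreducible_scalar_action_general q hq X Y hrel hirr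
end

section
/- Let λ, λ' ∈ ℂ with λ·λ' ≠ q²/((1 − q²)(q − q⁻¹)). Then K'² lies in the ℂ-subalgebra of A generated by the two character-shifted elements E·K' + λ·K' and F + λ'·K'. -/
/-!
With the `q`-commutator `[x, y]_c = x * y - c • (y * x)` at `c = q²`, the relations say
`[E, K⁻¹]_c = 0`, `[K⁻¹, F]_c = 0` and that `[E * K⁻¹, F]_c` is a multiple of `1 - K⁻²`. Hence in
`[E * K⁻¹ + λ • K⁻¹, F + λ' • K⁻¹]_c` the mixed terms vanish and only a scalar and a multiple of
`K⁻²` survive; the condition on `λ * λ'` says precisely that the coefficient of `K⁻²` is nonzero.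
-/

section qCommutator

variable {R A : Type*} [CommRing R] [Ring A] [Algebra R A]

/-- The `q`-commutator `x * y - c • (y * x)`, with deformation parameter `c`, as a bilinear map:
it vanishes exactly when `x` and `y` commute up to the factor `c`. -/
def qCommutator (c : R) : A →ₗ[R] A →ₗ[R] A :=
  LinearMap.mul R A - c • (LinearMap.mul R A).flip

theorem qCommutator_apply (c : R) (x y : A) : qCommutator c x y = x * y - c • (y * x) := rfl

theorem qCommutator_eq_zero_iff {c : R} {x y : A} :
    qCommutator c x y = 0 ↔ x * y = c • (y * x) :=
  sub_eq_zero

theorem qCommutator_self (c : R) (x : A) : qCommutator c x x = (1 - c) • x ^ 2 := by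
  rw [qCommutator_apply, ← sq, sub_smul, one_smul]

theorem qCommutator_mem {S : Subalgebra R A} (c : R) {x y : A} (hx : x ∈ S) (hy : y ∈ S) :
    qCommutator c x y ∈ S :=
  S.sub_mem (S.mul_mem hx hy) (S.smul_mem (S.mul_mem hy hx) c)

theorem qCommutator_units_inv_right_eq_zero_iff {c : R} {x : A} {u : Aˣ} :
    qCommutator c x ↑u⁻¹ = 0 ↔ qCommutator c ↑u x = 0 := by
  have semiconj_iff : SemiconjBy (↑u⁻¹ : A) (c • x) x ↔ SemiconjBy (↑u : A) x (c • x) :=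
    SemiconjBy.units_inv_symm_left_iff
  rw [qCommutator_eq_zero_iff, qCommutator_eq_zero_iff, eq_comm]
  simpa only [SemiconjBy, smul_mul_assoc, mul_smul_comm] using semiconj_iff

theorem qCommutator_units_inv_left_eq_zero_iff {c : R} {x : A} {u : Aˣ} :
    qCommutator c ↑u⁻¹ x = 0 ↔ qCommutator c x ↑u = 0 := by
  simpa only [inv_inv] using (qCommutator_units_inv_right_eq_zero_iff (x := x) (u := u⁻¹)).symm

theorem qCommutator_mul_self_right (c : R) (x z : A) :
    qCommutator c (x * z) z = qCommutator c x z * z := by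
  simp only [qCommutator_apply, sub_mul, smul_mul_assoc, mul_assoc]

theorem qCommutator_mul_left_of_eq_zero {c : R} {y z : A} (hzy : qCommutator c z y = 0) (x : A) :
    qCommutator c (x * z) y = c • (⁅x, y⁆ * z) := by
  rw [qCommutator_apply, mul_assoc, qCommutator_eq_zero_iff.mp hzy, Ring.lie_def, sub_mul,
    smul_sub, mul_smul_comm, mul_assoc, mul_assoc]

theorem qCommutator_add_smul_add_smul {c : R} {x y z : A} (hxz : qCommutator c x z = 0)
    (hzy : qCommutator c z y = 0) (a b : R) :
    qCommutator c (x + a • z) (y + b • z) =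
      qCommutator c x y + (a * b * (1 - c)) • z ^ 2 := by
  simp only [map_add, map_smul, LinearMap.add_apply, LinearMap.smul_apply, hxz, hzy,
    qCommutator_self]
  module

theorem qCommutator_mul_units_inv {c d : R} {E F : A} {K : Aˣ}
    (hFK : qCommutator c F ↑K = 0) (hEF : ⁅E, F⁆ = d • ((K : A) - ↑K⁻¹)) :
    qCommutator c (E * ↑K⁻¹) F = (c * d) • (1 - (↑K⁻¹ : A) ^ 2) := by
  rw [qCommutator_mul_left_of_eq_zero (qCommutator_units_inv_left_eq_zero_iff.mpr hFK), hEF,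
    smul_mul_assoc, smul_smul, sub_mul, Units.mul_inv, sq]

theorem qCommutator_characterShift {c d : R} {E F : A} {K : Aˣ}
    (hKE : qCommutator c ↑K E = 0) (hFK : qCommutator c F ↑K = 0)
    (hEF : ⁅E, F⁆ = d • ((K : A) - ↑K⁻¹)) (a b : R) :
    qCommutator c (E * ↑K⁻¹ + a • (↑K⁻¹ : A)) (F + b • (↑K⁻¹ : A)) =
      algebraMap R A (c * d) + (a * b * (1 - c) - c * d) • (↑K⁻¹ : A) ^ 2 := by
  have hEK : qCommutator c (E * ↑K⁻¹) (↑K⁻¹ : A) = 0 := by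
    rw [qCommutator_mul_self_right, qCommutator_units_inv_right_eq_zero_iff.mpr hKE, zero_mul]
  have hKF : qCommutator c (↑K⁻¹ : A) F = 0 := qCommutator_units_inv_left_eq_zero_iff.mpr hFK
  rw [qCommutator_add_smul_add_smul hEK hKF, qCommutator_mul_units_inv hFK hEF,
    Algebra.algebraMap_eq_smul_one]
  module

theorem units_inv_sq_mem_adjoin_characterShift {c d : R} {E F : A} {K : Aˣ}
    (hKE : qCommutator c ↑K E = 0) (hFK : qCommutator c F ↑K = 0)
    (hEF : ⁅E, F⁆ = d • ((K : A) - ↑K⁻¹)) {a b : R} (hab : IsUnit (a * b * (1 - c) - c * d)) :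
    (↑K⁻¹ : A) ^ 2 ∈
      Algebra.adjoin R {E * ↑K⁻¹ + a • (↑K⁻¹ : A), F + b • (↑K⁻¹ : A)} := by
  set S := Algebra.adjoin R {E * ↑K⁻¹ + a • (↑K⁻¹ : A), F + b • (↑K⁻¹ : A)}
  have hcomm : qCommutator c (E * ↑K⁻¹ + a • (↑K⁻¹ : A)) (F + b • (↑K⁻¹ : A)) ∈ S :=
    qCommutator_mem c (Algebra.subset_adjoin (.inl rfl)) (Algebra.subset_adjoin (.inr rfl))
  rw [qCommutator_characterShift hKE hFK hEF,
    add_mem_cancel_left (S.algebraMap_mem (c * d))] at hcomm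
  obtain ⟨r, hr⟩ := hab
  rw [← hr] at hcomm
  exact (Submodule.smul_mem_iff_of_isUnit (Subalgebra.toSubmodule S) r.isUnit).mp hcomm

end qCommutator

theorem sub_inv_ne_zero_of_sq_ne_one {D : Type*} [DivisionRing D] {q : D} (hq0 : q ≠ 0)
    (hq1 : q ^ 2 ≠ 1) : q - q⁻¹ ≠ 0 := by
  rwa [sub_ne_zero, ne_eq, ← mul_eq_one_iff_eq_inv₀ hq0, ← sq]

theorem uqsl2_Ksq_mem_adjoin_general {k : Type*} [Field k]
    (q : k) (hq0 : q ≠ 0) (hq1 : q ^ 2 ≠ 1)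
    {A : Type*} [Ring A] [Algebra k A]
    (E F K K' : A)
    (hKK' : K * K' = 1) (hK'K : K' * K = 1)
    (hKE : K * E = (q ^ 2) • (E * K))
    (hKF : K * F = (q ^ 2)⁻¹ • (F * K))
    (hEF : E * F - F * E = (q - q⁻¹)⁻¹ • (K - K'))
    (lam lam' : k)
    (hll : lam * lam' ≠ q ^ 2 / ((1 - q ^ 2) * (q - q⁻¹))) :
    K' ^ 2 ∈ Algebra.adjoin k ({E * K' + lam • K', F + lam' • K'} : Set A) := by
  let u : Aˣ := ⟨K, K', hKK', hK'K⟩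
  have huE : qCommutator (q ^ 2) ↑u E = 0 := qCommutator_eq_zero_iff.mpr hKE
  have hFu : qCommutator (q ^ 2) F ↑u = 0 :=
    qCommutator_eq_zero_iff.mpr ((eq_inv_smul_iff₀ (pow_ne_zero 2 hq0)).mp hKF).symm
  have hcoeff : lam * lam' * (1 - q ^ 2) - q ^ 2 * (q - q⁻¹)⁻¹ ≠ 0 := by
    have hq : q - q⁻¹ ≠ 0 := sub_inv_ne_zero_of_sq_ne_one hq0 hq1
    rwa [← div_eq_mul_inv, sub_ne_zero, ne_eq, eq_div_iff hq, mul_assoc,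
      ← eq_div_iff (mul_ne_zero (sub_ne_zero.mpr hq1.symm) hq)]
  exact units_inv_sq_mem_adjoin_characterShift huE hFu hEF hcoeff.isUnit

/-- If `λ·λ' ≠ q²/((1−q²)(q−q⁻¹))`, then `K'²` lies in the subalgebra generated by the
character-shifted elements `E·K' + λ·K'` and `F + λ'·K'`. -/
theorem uqsl2_Ksq_mem_adjoin
    (q : ℂ) (hq0 : q ≠ 0) (hq1 : q ^ 2 ≠ 1)
    {A : Type*} [Ring A] [Algebra ℂ A]
    (E F K K' : A)
    (hKK' : K * K' = 1) (hK'K : K' * K = 1)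
    (hKE : K * E = (q ^ 2) • (E * K))
    (hKF : K * F = (q ^ 2)⁻¹ • (F * K))
    (hEF : E * F - F * E = (q - q⁻¹)⁻¹ • (K - K'))
    (lam lam' : ℂ)
    (hll : lam * lam' ≠ q ^ 2 / ((1 - q ^ 2) * (q - q⁻¹))) :
    K' ^ 2 ∈ Algebra.adjoin ℂ ({E * K' + lam • K', F + lam' • K'} : Set A) := by
  exact uqsl2_Ksq_mem_adjoin_general q hq0 hq1 E F K K' hKK' hK'K hKE hKF hEF lam lam' hll
end

section
/- Let w₁, w₂ ∈ S_m and set B := N(w₁) ∩ N(w₂). Assume B is pairwise orthogonal and assume that every pair of the form (k, k+1) occurring in N(w₁) belongs to B. Then every element of B is of the form (k, k+1), i.e. B consists only of simple roots. -/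
/-- The inversion set `N(w) = {(i,j) | i < j, w⁻¹(i) > w⁻¹(j)}` of a permutation,
realizing `Φ⁺(w)` in type `A_{m−1}`. -/
def invSet (m : ℕ) (w : Equiv.Perm (Fin m)) : Finset (Fin m × Fin m) :=
  Finset.univ.filter (fun p => p.1 < p.2 ∧ w⁻¹ p.2 < w⁻¹ p.1)

/-- A pair `(k, k+1)`, corresponding to a simple root. -/
def IsSimplePair {m : ℕ} (p : Fin m × Fin m) : Prop :=
  (p.1 : ℕ) + 1 = (p.2 : ℕ)

instance {m : ℕ} : DecidablePred (IsSimplePair (m := m)) :=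
  fun p => inferInstanceAs (Decidable ((p.1 : ℕ) + 1 = (p.2 : ℕ)))

/-- Orthogonality of the roots `e_i − e_j` and `e_k − e_l`: `{i,j} ∩ {k,l} = ∅`. -/
def OrthPair {m : ℕ} (p q : Fin m × Fin m) : Prop :=
  p.1 ≠ q.1 ∧ p.1 ≠ q.2 ∧ p.2 ≠ q.1 ∧ p.2 ≠ q.2

/-- A set of pairs is pairwise orthogonal. -/
def PairwiseOrth {m : ℕ} (B : Finset (Fin m × Fin m)) : Prop :=
  ∀ p ∈ B, ∀ q ∈ B, p ≠ q → OrthPair p q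

/-!
For `f = w₁⁻¹` and `g = w₂⁻¹`, let `(i, j)` be a common inversion. Walking from `i` up to `j` along
covers, some step `c ⋖ d` takes `f` from a value `≥ f i` to a value `< f i`. It is a descent of `f`,
hence of `g`. If `c = i`, then `(i, d)` is a common inversion sharing its first entry with `(i, j)`,
so `d = j` and `i ⋖ j`. If `c ≠ i`, then the inversion `(c, j)` of `f` is not one of `g`, as it
would share its second entry with `(i, j)`; thus `g d < g c ≤ g j < g i`, so `(i, d)` is again a
common inversion. This forces `d = j`, contradicting `g d < g j`.
-/

/-- The inversions of a map `f` between ordered types: the pairs `a < b` with `f b < f a`. The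
inversion set `N(w)` of a permutation is the case `f = w⁻¹`. -/
def inversionSet {α β : Type*} [LT α] [LT β] (f : α → β) : Set (α × α) :=
  {p | p.1 < p.2 ∧ f p.2 < f p.1}

theorem mk_mem_inversionSet_inter {α β γ : Type*} [LT α] [LT β] [LT γ] {f : α → β} {g : α → γ}
    {a b : α} : (a, b) ∈ inversionSet f ∩ inversionSet g ↔ a < b ∧ f b < f a ∧ g b < g a :=
  and_and_left.symm

theorem exists_covBy_and_not_of_le {α : Type*} [PartialOrder α] [LocallyFiniteOrder α]
    {P : α → Prop} {a b : α} (hab : a ≤ b) (ha : P a) (hb : ¬P b) :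
    ∃ c d, a ≤ c ∧ c ⋖ d ∧ d ≤ b ∧ P c ∧ ¬P d := by
  rw [le_iff_reflTransGen_covBy] at hab
  induction hab with
  | refl => exact absurd ha hb
  | @tail x y hax hxy ih =>
    by_cases hx : P x
    · exact ⟨x, y, le_iff_reflTransGen_covBy.2 hax, hxy, le_rfl, hx, hb⟩
    · obtain ⟨c, d, hac, hcd, hdx, hc, hd⟩ := ih hx
      exact ⟨c, d, hac, hcd, hdx.trans hxy.le, hc, hd⟩

theorem B_subset_simple_general {α β γ : Type*} [PartialOrder α] [LocallyFiniteOrder α]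
    [LinearOrder β] [LinearOrder γ] {f : α → β} {g : α → γ}
    (hfst : Set.InjOn Prod.fst (inversionSet f ∩ inversionSet g))
    (hsnd : Set.InjOn Prod.snd (inversionSet f ∩ inversionSet g))
    (hdesc : ∀ p ∈ inversionSet f, p.1 ⋖ p.2 → p ∈ inversionSet g) :
    ∀ p ∈ inversionSet f ∩ inversionSet g, p.1 ⋖ p.2 := by
  rintro ⟨i, j⟩ hp
  obtain ⟨hij, hfij, hgij⟩ := mk_mem_inversionSet_inter.1 hp
  have eq_right {k : α} (hik : i < k) (hf : f k < f i) (hg : g k < g i) : k = j :=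
    congrArg Prod.snd <| hfst (mk_mem_inversionSet_inter.2 ⟨hik, hf, hg⟩) hp rfl
  have eq_left {k : α} (hkj : k < j) (hf : f j < f k) (hg : g j < g k) : k = i :=
    congrArg Prod.fst <| hsnd (mk_mem_inversionSet_inter.2 ⟨hkj, hf, hg⟩) hp rfl
  obtain ⟨c, d, hic, hcd, hdj, hfc, hfd⟩ :=
    exists_covBy_and_not_of_le (P := fun x ↦ f i ≤ f x) hij.le le_rfl hfij.not_ge
  rw [not_le] at hfd
  have hgcd : g d < g c := (hdesc (c, d) ⟨hcd.lt, hfd.trans_le hfc⟩ hcd).2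
  rcases eq_or_ne c i with rfl | hci
  · obtain rfl : d = j := eq_right hcd.lt hfd hgcd
    exact hcd
  · have hgcj : g c ≤ g j :=
      not_lt.1 fun h ↦ hci <| eq_left (hcd.lt.trans_le hdj) (hfij.trans_le hfc) h
    have hgdj : g d < g j := hgcd.trans_le hgcj
    obtain rfl : d = j := eq_right (hic.trans_lt hcd.lt) hfd (hgdj.trans hgij)
    exact absurd hgdj (lt_irrefl _)

theorem coe_invSet {m : ℕ} (w : Equiv.Perm (Fin m)) :
    (invSet m w : Set (Fin m × Fin m)) = inversionSet (w⁻¹ : Equiv.Perm (Fin m)) := by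
  ext p
  simp [invSet, inversionSet]

theorem isSimplePair_iff_covBy {m : ℕ} {p : Fin m × Fin m} : IsSimplePair p ↔ p.1 ⋖ p.2 := by
  rw [IsSimplePair, Fin.covBy_iff, Nat.covBy_iff_add_one_eq]

theorem PairwiseOrth.injOn_fst {m : ℕ} {B : Finset (Fin m × Fin m)} (hB : PairwiseOrth B) :
    Set.InjOn Prod.fst (B : Set (Fin m × Fin m)) :=
  fun p hp q hq hpq ↦ by_contra fun hne ↦ (hB p hp q hq hne).1 hpq

theorem PairwiseOrth.injOn_snd {m : ℕ} {B : Finset (Fin m × Fin m)} (hB : PairwiseOrth B) :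
    Set.InjOn Prod.snd (B : Set (Fin m × Fin m)) :=
  fun p hp q hq hpq ↦ by_contra fun hne ↦ (hB p hp q hq hne).2.2.2 hpq

/-- If `B = N(w₁) ∩ N(w₂)` is pairwise orthogonal and every simple pair of `N(w₁)` lies
in `B`, then `B` consists only of simple pairs. -/
theorem B_subset_simple {m : ℕ} (w₁ w₂ : Equiv.Perm (Fin m))
    (B : Finset (Fin m × Fin m)) (hB : B = invSet m w₁ ∩ invSet m w₂)
    (horth : PairwiseOrth B)
    (hsimple : ∀ q ∈ invSet m w₁, IsSimplePair q → q ∈ B) :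
    ∀ p ∈ B, IsSimplePair p := by
  have hcoe : (B : Set (Fin m × Fin m)) = inversionSet ⇑w₁⁻¹ ∩ inversionSet ⇑w₂⁻¹ := by
    rw [hB, Finset.coe_inter, coe_invSet, coe_invSet]
  simp only [← Finset.mem_coe, hcoe, coe_invSet, isSimplePair_iff_covBy] at hsimple ⊢
  exact B_subset_simple_general (hcoe ▸ horth.injOn_fst) (hcoe ▸ horth.injOn_snd)
    fun p hp hcov ↦ (hsimple p hp hcov).2
end

section
/- Let w₁, w₂ ∈ S_m and set B := N(w₁) ∩ N(w₂); assume B is nonempty and pairwise orthogonal. Then the following two assertions are equivalent: (1) there exist w₁', w₂' ∈ S_m with N(w₁) ⊆ N(w₁'), N(w₂) ⊆ N(w₂'), N(w₁') ∩ N(w₂') = B, and N(w₁') ∪ N(w₂') = {(i,j) | 1 ≤ i < j ≤ m}; (2) there exist w₁'', u, x ∈ S_m with N(w₁) ⊆ N(w₁''), w₁'' = u·x, |N(w₁'')| = |N(u)| + |N(x)|, |N(x)| = |B|, and B = {(u(i), u(j)) : (i,j) ∈ N(x)} with u(i) < u(j) for every (i,j) ∈ N(x). -/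
/-!
Read `w` as the word `w 1, …, w m`; then `N(w)` records the pairs whose larger entry comes first.
Enlarge `N(w₁)` and then `N(w₂)`, keeping `B = N(w₁) ∩ N(w₂)`, until neither can grow further.
Swapping consecutive entries `a < b` of one word adds only the root `(a, b)`, so now every such
ascent is an inversion of the other word. Orthogonality of `B` then forces the two entries of each
pair in `B` to be consecutive in both words. Following the first word from `a` to `b > a`, the
position in the second word decreases at each step, except that it increases by one at the isolated
steps inside a pair of `B`; hence `(a, b)` is an inversion of one of the two words. Finally, the
complement of `N(w₂)` is `N(u)` for `u = w₂ w₀`, and `N(u) = N(w₁) \ B` means that `u` is a prefix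
of `w₁` in the weak order whose complementary factor contributes exactly the roots in `B`.
-/

open Equiv Finset

/-- The set of pairs `i < j`, realizing all of `Φ⁺`. -/
abbrev positivePairs (m : ℕ) : Finset (Fin m × Fin m) :=
  univ.filter fun p => p.1 < p.2

/-- The pair `(w₁', w₂')` fills up `(w₁, w₂)`: the inversion sets grow to cover `Φ⁺` without
enlarging their intersection. -/
def IsFillUp {m : ℕ} (w₁ w₂ w₁' w₂' : Perm (Fin m)) : Prop :=
  invSet m w₁ ⊆ invSet m w₁' ∧ invSet m w₂ ⊆ invSet m w₂' ∧
    invSet m w₁' ∩ invSet m w₂' = invSet m w₁ ∩ invSet m w₂ ∧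
    invSet m w₁' ∪ invSet m w₂' = positivePairs m

/-- The factorization `w = u * x` is length-additive and the roots contributed by `x` are those
of `B`, i.e. `w` has a reduced expression whose last `|B|` roots are the elements of `B`. -/
def IsFinalBlock {m : ℕ} (B : Finset (Fin m × Fin m)) (w u x : Perm (Fin m)) : Prop :=
  w = u * x ∧ (invSet m w).card = (invSet m u).card + (invSet m x).card ∧
    (invSet m x).card = B.card ∧ B = (invSet m x).image (fun p => (u p.1, u p.2)) ∧
    ∀ p ∈ invSet m x, u p.1 < u p.2

/-- Every pair of consecutive entries `a < b` in the word of `w` is an inversion of `v`, so no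
single adjacent swap enlarges `N(w)` without enlarging `N(w) ∩ N(v)`. -/
def IsSaturated {m : ℕ} (w v : Perm (Fin m)) : Prop :=
  ∀ ⦃a b⦄, a < b → w⁻¹ a ⋖ w⁻¹ b → (a, b) ∈ invSet m v

theorem exists_covBy_of_not {ι α : Type*} [LinearOrder α] [LocallyFiniteOrder α] (e : ι ≃ α)
    {P : ι → Prop} {a b : ι} (hab : e a ≤ e b) (ha : P a) (hb : ¬ P b) :
    ∃ c d, e a ≤ e c ∧ e c ⋖ e d ∧ e d ≤ e b ∧ P c ∧ ¬ P d := by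
  by_contra! h
  suffices ∀ q, Relation.ReflTransGen (· ⋖ ·) (e a) q → q ≤ e b → P (e.symm q) from
    hb (e.symm_apply_apply b ▸ this (e b) (le_iff_reflTransGen_covBy.1 hab) le_rfl)
  intro q hpath
  induction hpath with
  | refl => simpa using fun _ => ha
  | @tail p q hpath hpq ih =>
    intro hqb
    have hstep := h (e.symm p) (e.symm q)
    simp only [e.apply_symm_apply] at hstep
    exact hstep (le_iff_reflTransGen_covBy.2 hpath) hpq hqb (ih (hpq.le.trans hqb))

theorem swap_lt_swap_iff_of_covBy {α : Type*} [LinearOrder α] {i j k l : α} (hij : i ⋖ j)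
    (h : ¬ (k = i ∧ l = j)) (h' : ¬ (k = j ∧ l = i)) :
    swap i j k < swap i j l ↔ k < l := by
  have hlt := hij.lt
  have hgap (c : α) : c ≤ i ∨ j ≤ c := (le_or_gt c i).imp_right fun h => not_lt.1 (hij.2 h)
  grind [hgap k, hgap l]

section

variable {m : ℕ} {u v w : Perm (Fin m)} {a b i j : Fin m}

theorem mem_invSet : (a, b) ∈ invSet m w ↔ a < b ∧ w⁻¹ b < w⁻¹ a := by
  simp only [invSet, mem_filter, mem_univ, true_and]

theorem mem_invSet_or_lt (w : Perm (Fin m)) (hab : a < b) :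
    (a, b) ∈ invSet m w ∨ w⁻¹ a < w⁻¹ b := by
  rw [mem_invSet, and_iff_right hab]
  exact lt_or_gt_of_ne (w⁻¹.injective.ne hab.ne')

theorem invSet_subset_positivePairs (w : Perm (Fin m)) : invSet m w ⊆ positivePairs m :=
  monotone_filter_right _ fun _ _ h => h.1

theorem invSet_swap_mul (hab : a < b) (hcov : w⁻¹ a ⋖ w⁻¹ b) :
    invSet m (swap a b * w) = insert (a, b) (invSet m w) := by
  have hswap (c : Fin m) : (swap a b * w)⁻¹ c = swap (w⁻¹ a) (w⁻¹ b) (w⁻¹ c) := by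
    rw [mul_inv_rev, swap_inv, Perm.mul_apply, w⁻¹.injective.map_swap]
  ext ⟨c, d⟩
  rw [mem_insert, mem_invSet, mem_invSet, hswap, hswap, Prod.mk.injEq]
  by_cases hcd : c = a ∧ d = b
  · obtain ⟨rfl, rfl⟩ := hcd
    simpa [hab] using hcov.lt
  · rw [or_iff_right hcd]
    refine and_congr_right fun hlt => swap_lt_swap_iff_of_covBy hcov ?_ ?_ <;>
      rw [w⁻¹.injective.eq_iff, w⁻¹.injective.eq_iff]
    · rintro ⟨rfl, rfl⟩
      exact hab.not_gt hlt
    · exact fun h => hcd h.symm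

theorem exists_isSaturated (w v : Perm (Fin m)) :
    ∃ w', invSet m w ⊆ invSet m w' ∧ invSet m w' ∩ invSet m v = invSet m w ∩ invSet m v ∧
      IsSaturated w' v := by
  obtain ⟨w', ⟨hsub, hinter⟩, hmax⟩ := Set.Finite.exists_maximalFor (invSet m)
    {w' | invSet m w ⊆ invSet m w' ∧ invSet m w' ∩ invSet m v = invSet m w ∩ invSet m v}
    (Set.toFinite _) ⟨w, Subset.rfl, rfl⟩
  refine ⟨w', hsub, hinter, fun a b hab hcov => ?_⟩
  by_contra hv
  have hswap := invSet_swap_mul hab hcov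
  have hgrow : invSet m w' ⊆ invSet m (swap a b * w') := hswap ▸ subset_insert _ _
  have hback : invSet m (swap a b * w') ⊆ invSet m w' :=
    hmax ⟨hsub.trans hgrow, by rw [hswap, insert_inter_of_notMem hv, hinter]⟩ hgrow
  have hmem : (a, b) ∈ invSet m w' := hback (hswap ▸ mem_insert_self _ _)
  exact hcov.lt.not_gt (mem_invSet.1 hmem).2

theorem IsSaturated.mono {v' : Perm (Fin m)} (h : IsSaturated w v)
    (hv : invSet m v ⊆ invSet m v') : IsSaturated w v' :=
  fun _ _ hab hcov => hv (h hab hcov)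

theorem lt_of_mem_inter_of_mem_left (horth : PairwiseOrth (invSet m w ∩ invSet m v))
    (hij : (i, j) ∈ invSet m w ∩ invSet m v) {k : Fin m} (hki : k ≠ i)
    (hkj : (k, j) ∈ invSet m w) : v⁻¹ k < v⁻¹ j := by
  refine (mem_invSet_or_lt v (mem_invSet.1 hkj).1).resolve_left fun hv => ?_
  exact (horth _ (mem_inter.2 ⟨hkj, hv⟩) _ hij fun h => hki (congrArg Prod.fst h)).2.2.2 rfl

theorem lt_of_mem_inter_of_mem_right (horth : PairwiseOrth (invSet m w ∩ invSet m v))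
    (hij : (i, j) ∈ invSet m w ∩ invSet m v) {k : Fin m} (hkj : k ≠ j)
    (hik : (i, k) ∈ invSet m w) : v⁻¹ i < v⁻¹ k := by
  refine (mem_invSet_or_lt v (mem_invSet.1 hik).1).resolve_left fun hv => ?_
  exact (horth _ (mem_inter.2 ⟨hik, hv⟩) _ hij fun h => hkj (congrArg Prod.snd h)).1 rfl

theorem lt_and_lt_or_lt_and_lt_of_between (horth : PairwiseOrth (invSet m w ∩ invSet m v))
    (hij : (i, j) ∈ invSet m w ∩ invSet m v) {k : Fin m} (hjk : w⁻¹ j < w⁻¹ k)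
    (hki : w⁻¹ k < w⁻¹ i) : (k < i ∧ v⁻¹ k < v⁻¹ j) ∨ (j < k ∧ v⁻¹ i < v⁻¹ k) := by
  obtain ⟨hlt, hv⟩ := mem_invSet.1 (mem_inter.1 hij).2
  have hne_i : k ≠ i := by rintro rfl; exact hki.false
  have hne_j : k ≠ j := by rintro rfl; exact hjk.false
  have hsmall : k < j → v⁻¹ k < v⁻¹ j := fun h =>
    lt_of_mem_inter_of_mem_left horth hij hne_i (mem_invSet.2 ⟨h, hjk⟩)
  have hlarge : i < k → v⁻¹ i < v⁻¹ k := fun h =>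
    lt_of_mem_inter_of_mem_right horth hij hne_j (mem_invSet.2 ⟨h, hki⟩)
  rcases hne_i.lt_or_gt with hk | hk
  · exact .inl ⟨hk, hsmall (hk.trans hlt)⟩
  · refine .inr ⟨hne_j.lt_or_gt.resolve_left fun hkj => ?_, hlarge hk⟩
    exact ((hlarge hk).trans (hsmall hkj)).asymm hv

theorem IsSaturated.covBy (hsat : IsSaturated w v)
    (horth : PairwiseOrth (invSet m w ∩ invSet m v))
    (hij : (i, j) ∈ invSet m w ∩ invSet m v) : w⁻¹ j ⋖ w⁻¹ i := by
  obtain ⟨hlt, hw⟩ := mem_invSet.1 (mem_inter.1 hij).1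
  have hv := (mem_invSet.1 (mem_inter.1 hij).2).2
  obtain ⟨l, k, hjl, hlk, hki, hl, hk⟩ := exists_covBy_of_not w⁻¹
    (P := fun k => v⁻¹ k ≤ v⁻¹ j) hw.le le_rfl hv.not_ge
  have hl_small : l = j ∨ l < i := hjl.eq_or_lt.imp (fun h => (w⁻¹.injective h).symm) fun h => by
    have hlarge : ¬ (j < l ∧ v⁻¹ i < v⁻¹ l) := fun h => (hv.trans h.2).not_ge hl
    have hbetween := lt_and_lt_or_lt_and_lt_of_between horth hij h (hlk.lt.trans_le hki)
    exact (hbetween.resolve_right hlarge).1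
  have hk_large : k = i ∨ j < k := hki.eq_or_lt.imp (fun h => w⁻¹.injective h) fun h => by
    have hsmall : ¬ (k < i ∧ v⁻¹ k < v⁻¹ j) := fun h => hk h.2.le
    have hbetween := lt_and_lt_or_lt_and_lt_of_between horth hij (hjl.trans_lt hlk.lt) h
    exact (hbetween.resolve_left hsmall).1
  have hdescent : ¬ l < k := fun h => hk ((mem_invSet.1 (hsat h hlk)).2.le.trans hl)
  have hascent : ¬ (l = j ∧ k = i) → l < k := by grind
  obtain ⟨rfl, rfl⟩ := not_not.1 (mt hascent hdescent)
  exact hlk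

theorem IsSaturated.lt_or_mem_inter (hsat : IsSaturated w v) (hcov : w⁻¹ a ⋖ w⁻¹ b) :
    v⁻¹ b < v⁻¹ a ∨ (b, a) ∈ invSet m w ∩ invSet m v := by
  have hne : a ≠ b := by rintro rfl; exact hcov.lt.false
  rcases hne.lt_or_gt with hab | hba
  · exact .inl (mem_invSet.1 (hsat hab hcov)).2
  · exact (mem_invSet_or_lt v hba).symm.imp_right fun hv =>
      mem_inter.2 ⟨mem_invSet.2 ⟨hba, hcov.lt⟩, hv⟩

theorem IsSaturated.union_eq (hwv : IsSaturated w v) (hvw : IsSaturated v w)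
    (horth : PairwiseOrth (invSet m w ∩ invSet m v)) :
    invSet m w ∪ invSet m v = positivePairs m := by
  refine (union_subset (invSet_subset_positivePairs w) (invSet_subset_positivePairs v)).antisymm ?_
  rintro ⟨a, b⟩ hab
  replace hab : a < b := by simpa using hab
  by_contra hnot
  obtain ⟨hw, hv⟩ := not_or.1 (mem_union.not.1 hnot)
  replace hw := (mem_invSet_or_lt w hab).resolve_left hw
  replace hv := (mem_invSet_or_lt v hab).resolve_left hv
  have horth' : PairwiseOrth (invSet m v ∩ invSet m w) := inter_comm (invSet m w) _ ▸ horth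
  have hcovBy {i j} (h : (i, j) ∈ invSet m w ∩ invSet m v) : v⁻¹ j ⋖ v⁻¹ i :=
    hvw.covBy horth' (inter_comm (invSet m w) _ ▸ h)
  -- The second alternative allows for the one step that may overtake `a` in the word of `v`, namely
  -- the step from `a` to its partner in the intersection.
  obtain ⟨l, k, -, hlk, -, hl, hk⟩ := exists_covBy_of_not w⁻¹
    (P := fun k => v⁻¹ k ≤ v⁻¹ a ∨ (k, a) ∈ invSet m w ∩ invSet m v) hw.le (.inl le_rfl) (by
      rintro (h | h)
      · exact h.not_gt hv
      · exact (mem_invSet.1 (mem_inter.1 h).1).1.asymm hab)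
  obtain ⟨hak, hka⟩ := not_or.1 hk
  rw [not_le] at hak
  rcases hl with hl | hl <;> rcases hwv.lt_or_mem_inter hlk with hdec | hkl
  · exact hak.not_ge (hdec.le.trans hl)
  · have hla : l = a := v⁻¹.injective (hl.eq_of_not_lt fun h => (hcovBy hkl).2 h hak)
    exact hka (hla ▸ hkl)
  · exact (hcovBy hl).2 hak hdec
  · have hne : (k, l) ≠ (l, a) := fun h => hlk.lt.ne (congrArg (fun p => w⁻¹ p.1) h).symm
    exact (horth _ hkl _ hl hne).2.2.1 rfl

theorem invSet_mul_revPerm (w : Perm (Fin m)) :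
    invSet m (w * Fin.revPerm) = positivePairs m \ invSet m w := by
  ext ⟨a, b⟩
  have hrev (c : Fin m) : (w * Fin.revPerm : Perm (Fin m))⁻¹ c = (w⁻¹ c).rev := rfl
  simp only [mem_sdiff, mem_filter, mem_univ, true_and, mem_invSet, hrev, Fin.rev_lt_rev]
  refine and_congr_right fun hab => ?_
  rw [and_iff_right hab, not_lt, le_iff_lt_or_eq, or_iff_left (w⁻¹.injective.ne hab.ne)]

theorem image_invSet_inv_mul (h : invSet m u ⊆ invSet m w) :
    (invSet m (u⁻¹ * w)).image (fun p => (u p.1, u p.2)) = invSet m w \ invSet m u := by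
  ext ⟨a, b⟩
  have hpreimage : (a, b) ∈ (invSet m (u⁻¹ * w)).image (fun p => (u p.1, u p.2)) ↔
      (u⁻¹ a, u⁻¹ b) ∈ invSet m (u⁻¹ * w) := by
    refine ⟨fun hmem => ?_, fun hmem => mem_image.2 ⟨_, hmem, by simp⟩⟩
    obtain ⟨⟨i, j⟩, hij, heq⟩ := mem_image.1 hmem
    obtain ⟨rfl, rfl⟩ := Prod.mk.inj heq
    simpa using hij
  have hinv (c : Fin m) : (u⁻¹ * w)⁻¹ (u⁻¹ c) = w⁻¹ c := by simp
  rw [hpreimage, mem_invSet, hinv, hinv, mem_sdiff]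
  constructor
  · rintro ⟨hu, hw⟩
    have hab : a < b := by
      refine (u⁻¹.injective.ne_iff.1 hu.ne).lt_or_gt.resolve_right fun hba => ?_
      exact hw.asymm (mem_invSet.1 (h (mem_invSet.2 ⟨hba, hu⟩))).2
    exact ⟨mem_invSet.2 ⟨hab, hw⟩, fun hmem => hu.asymm (mem_invSet.1 hmem).2⟩
  · rintro ⟨hw, hu⟩
    obtain ⟨hab, hw⟩ := mem_invSet.1 hw
    exact ⟨(mem_invSet_or_lt u hab).resolve_left hu, hw⟩

theorem isFinalBlock_sdiff (h : invSet m u ⊆ invSet m w) :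
    IsFinalBlock (invSet m w \ invSet m u) w u (u⁻¹ * w) := by
  have himage := image_invSet_inv_mul h
  have hcard : (invSet m (u⁻¹ * w)).card = (invSet m w \ invSet m u).card := by
    rw [← himage]
    exact (card_image_of_injective _ (u.injective.prodMap u.injective)).symm
  refine ⟨(mul_inv_cancel_left u w).symm, ?_, hcard, himage.symm, fun p hp => ?_⟩
  · rw [hcard, add_comm, card_sdiff_add_card_eq_card h]
  · have hmem := himage ▸ mem_image_of_mem _ hp
    exact (mem_invSet.1 (mem_sdiff.1 hmem).1).1

theorem exists_isFinalBlock_inter (h : invSet m w ∪ invSet m v = positivePairs m) :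
    ∃ u x, IsFinalBlock (invSet m w ∩ invSet m v) w u x := by
  have hcompl := invSet_mul_revPerm v
  have hsub : invSet m (v * Fin.revPerm) ⊆ invSet m w := by
    rw [hcompl, ← h, union_sdiff_right]
    exact sdiff_subset
  have hinter : invSet m w \ invSet m (v * Fin.revPerm) = invSet m w ∩ invSet m v := by
    rw [hcompl, ← h, union_sdiff_right, sdiff_sdiff_right_self, inf_eq_inter]
  exact ⟨_, _, hinter ▸ isFinalBlock_sdiff hsub⟩

end

theorem exists_isFillUp {m : ℕ} (w₁ w₂ : Perm (Fin m))
    (horth : PairwiseOrth (invSet m w₁ ∩ invSet m w₂)) :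
    ∃ w₁' w₂', IsFillUp w₁ w₂ w₁' w₂' := by
  obtain ⟨w₁', hsub₁, hinter₁, hsat₁⟩ := exists_isSaturated w₁ w₂
  obtain ⟨w₂', hsub₂, hinter₂, hsat₂⟩ := exists_isSaturated w₂ w₁'
  have hinter : invSet m w₁' ∩ invSet m w₂' = invSet m w₁ ∩ invSet m w₂ := by
    rw [inter_comm, hinter₂, inter_comm, hinter₁]
  exact ⟨w₁', w₂', hsub₁, hsub₂, hinter,
    (hsat₁.mono hsub₂).union_eq hsat₂ (hinter.symm ▸ horth)⟩

theorem fillup_iff_block_general {m : ℕ} (w₁ w₂ : Perm (Fin m))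
    (horth : PairwiseOrth (invSet m w₁ ∩ invSet m w₂)) :
    ∃ w₁' w₂' u x : Perm (Fin m),
      IsFillUp w₁ w₂ w₁' w₂' ∧ IsFinalBlock (invSet m w₁ ∩ invSet m w₂) w₁' u x := by
  obtain ⟨w₁', w₂', hfill⟩ := exists_isFillUp w₁ w₂ horth
  have ⟨_, _, hinter, hunion⟩ := hfill
  obtain ⟨u, x, hblock⟩ := exists_isFinalBlock_inter hunion
  exact ⟨w₁', w₂', u, x, hfill, hinter ▸ hblock⟩

/-- Equivalence of the two assertions of the main Weyl group theorem: filling up `w₁, w₂`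
so that their inversion sets intersect in `B` and cover everything, versus having an
extension `w₁''` with a reduced expression ending in the roots of `B`. -/
theorem fillup_iff_block {m : ℕ} (w₁ w₂ : Equiv.Perm (Fin m))
    (B : Finset (Fin m × Fin m)) (hB : B = invSet m w₁ ∩ invSet m w₂)
    (hne : B.Nonempty) (horth : PairwiseOrth B) :
    (∃ w₁' w₂' : Equiv.Perm (Fin m),
        invSet m w₁ ⊆ invSet m w₁' ∧ invSet m w₂ ⊆ invSet m w₂' ∧
        invSet m w₁' ∩ invSet m w₂' = B ∧
        invSet m w₁' ∪ invSet m w₂' = Finset.univ.filter (fun p => p.1 < p.2))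
    ↔ (∃ w u x : Equiv.Perm (Fin m),
        invSet m w₁ ⊆ invSet m w ∧ w = u * x ∧
        (invSet m w).card = (invSet m u).card + (invSet m x).card ∧
        (invSet m x).card = B.card ∧
        B = (invSet m x).image (fun p => (u p.1, u p.2)) ∧
        ∀ p ∈ invSet m x, u p.1 < u p.2) := by
  subst hB
  obtain ⟨w₁', w₂', u, x, hfill, hblock⟩ := fillup_iff_block_general w₁ w₂ horth
  exact iff_of_true ⟨w₁', w₂', hfill⟩ ⟨w₁', u, x, hfill.1, hblock⟩
end
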